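/- Let T be a binary tree with n vertices and let T̂ be its completion, the complete binary tree on 2n+1 vertices obtained from T by adding all n+1 possible leaves. Then the number of increasing labelings of T̂ satisfies f^{T̂} = (2n+1)! / ∏_{v ∈ T} (2 h_v + 1), where h_v is the hook length of v computed in T. -/

import Mathlib

/-- A binary tree: `nil` is the empty tree, and a vertex may have an empty or
nonempty left subtree and an empty or nonempty right subtree. -/
inductive BinTree : Type where
  | nil : BinTree
  | node (l r : BinTree) : BinTree
deriving DecidableEq

/-- The number of vertices of a binary tree. -/
def BinTree.size : BinTree → ℕ
  | .nil => 0
  | .node l r => l.size + r.size + 1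

/-- The product, over all vertices `v` of a binary tree, of `f h_v`, where
`h_v` is the hook length of `v` (the number of descendants of `v`, including
`v` itself). -/
def BinTree.hookProd (f : ℕ → ℝ) : BinTree → ℝ
  | .nil => 1
  | .node l r => f (l.size + r.size + 1) * l.hookProd f * r.hookProd f

/-- The vertices of a binary tree, encoded as paths from the root
(`false` = go to left child, `true` = go to right child). -/
def BinTree.positions : BinTree → List (List Bool)
  | .nil => []
  | .node l r =>
      [] :: (l.positions.map (fun p => false :: p) ++ r.positions.map (fun p => true :: p))

/-- The number `f^T` of increasing labelings of a binary tree `T`: bijections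
`ℓ` from the vertices of `T` to `{1, …, |T|}` (here `Fin T.size`) such that
`ℓ v < ℓ w` whenever `w` is a child of `v`. -/
noncomputable def BinTree.incLabelings (T : BinTree) : ℕ :=
  Nat.card {ℓ : {p // p ∈ T.positions} → Fin T.size //
    Function.Bijective ℓ ∧
    ∀ v w : {p // p ∈ T.positions}, (∃ b, (w : List Bool) = (v : List Bool) ++ [b]) → ℓ v < ℓ w}

/-- The completion `T̂` of a binary tree `T`: the complete binary tree on
`2|T|+1` vertices obtained from `T` by adding all `|T|+1` possible leaves. -/
def BinTree.completion : BinTree → BinTree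
  | .nil => .node .nil .nil
  | .node l r => .node l.completion r.completion

/-! Ordering the vertices of a tree by the ancestor relation, an increasing labeling is a linear
extension. The order of `node l r` is the disjoint union of the orders of `l` and `r` with a least
element added: the least element always receives the least label, and the remaining labels may be
distributed over `l` and `r` in `(|l| + |r|).choose |l|` ways. By induction this gives the hook
length formula `f^S = |S|! / ∏ h_v` for every binary tree `S`. In `T̂` a vertex of `T` has hook
length `2 h_v + 1` and the new leaves have hook length `1`. -/

section LinearExtensions

variable {α β γ δ : Type*} [Preorder α] [Preorder β]

/-- The linear extensions of `α` with values in `β`: bijections, not necessarily order isomorphisms,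
that preserve the order. For linearly ordered `β` these are the labelings of `α` by the elements
of `β` that increase along the order of `α`. -/
abbrev MonotoneEquiv (α β : Type*) [Preorder α] [Preorder β] : Type _ :=
  {f : α ≃ β // Monotone f}

/-- The number of linear extensions of a finite preorder `α`, with labels taken
in `Fin (Nat.card α)`. It is a junk value for infinite `α`. -/
noncomputable def numLinearExtensions (α : Type*) [Preorder α] : ℕ :=
  Nat.card (MonotoneEquiv α (Fin (Nat.card α)))

namespace MonotoneEquiv

/-- Transport of linear extensions along isomorphisms of the poset and of the set of labels. -/
def congr [Preorder γ] [Preorder δ] (e : α ≃o γ) (e' : β ≃o δ) :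
    MonotoneEquiv α β ≃ MonotoneEquiv γ δ :=
  (e.toEquiv.equivCongr e'.toEquiv).subtypeEquiv fun f =>
    ⟨fun hf => e'.monotone.comp (hf.comp e.symm.monotone), fun hf a b hab => by
      simpa using hf (e.monotone hab)⟩

theorem card_eq_numLinearExtensions [LinearOrder γ] [Finite γ] (h : Nat.card γ = Nat.card α) :
    Nat.card (MonotoneEquiv α γ) = numLinearExtensions α := by
  have := Fintype.ofFinite γ
  rw [Nat.card_eq_fintype_card] at h
  exact Nat.card_congr (congr (OrderIso.refl α) (Fintype.orderIsoFinOfCardEq γ h).symm)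

theorem card_eq_zero [Preorder γ] (h : Nat.card γ ≠ Nat.card α) :
    Nat.card (MonotoneEquiv α γ) = 0 :=
  have : IsEmpty (MonotoneEquiv α γ) := ⟨fun f => h (Nat.card_congr f.1).symm⟩
  Nat.card_of_isEmpty

/-- The linear extension of `WithBot α` that gives the least label to `⊥` and agrees with `f`
elsewhere. -/
def withBotCongr (f : MonotoneEquiv α β) : MonotoneEquiv (WithBot α) (WithBot β) :=
  ⟨f.1.withBotCongr, f.2.withBot_map⟩

theorem map_bot [OrderBot α] (f : MonotoneEquiv α (WithBot β)) : f.1 ⊥ = ⊥ :=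
  WithBot.le_bot_iff.1 <| (f.2 (bot_le (a := f.1.symm ⊥))).trans_eq (f.1.apply_symm_apply ⊥)

theorem withBotCongr_injective :
    Function.Injective (withBotCongr : MonotoneEquiv α β → _) := fun _ _ h =>
  Subtype.ext <| Equiv.ext fun a =>
    WithBot.coe_injective <| congrArg (fun e => e.1 (a : WithBot α)) h

theorem withBotCongr_surjective :
    Function.Surjective (withBotCongr : MonotoneEquiv α β → _) := by
  intro f
  have map_coe_ne_bot (a : α) : f.1 a ≠ ⊥ := f.map_bot ▸ f.1.injective.ne WithBot.coe_ne_bot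
  have coe_removeNone (a : α) : (Equiv.removeNone f.1 a : WithBot β) = f.1 a :=
    Equiv.removeNone_some f.1 (Option.ne_none_iff_exists'.1 (map_coe_ne_bot a))
  refine ⟨⟨Equiv.removeNone f.1, fun a b hab => ?_⟩, Subtype.ext <| Equiv.ext fun x => ?_⟩
  · rw [← WithBot.coe_le_coe, coe_removeNone, coe_removeNone]
    exact f.2 (WithBot.coe_le_coe.2 hab)
  · cases x with
    | bot => exact f.map_bot.symm
    | coe a => exact coe_removeNone a

section Sum

variable [Preorder γ] [DecidableEq γ]

/-- The linear extension of a disjoint union that labels `α` by the elements of `s` and `β` by the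
remaining ones. -/
def glue (s : Finset γ) (f : MonotoneEquiv α s) (g : MonotoneEquiv β {c // c ∉ s}) :
    MonotoneEquiv (α ⊕ β) γ :=
  ⟨(f.1.sumCongr g.1).trans (Equiv.sumCompl (· ∈ s)), by
    rintro _ _ (⟨h⟩ | ⟨h⟩)
    exacts [f.2 h, g.2 h]⟩

theorem range_glue_inl (s : Finset γ) (f : MonotoneEquiv α s)
    (g : MonotoneEquiv β {c // c ∉ s}) : Set.range (fun a => (glue s f g).1 (.inl a)) = s := by
  change Set.range (Subtype.val ∘ f.1) = s
  rw [f.1.surjective.range_comp, Subtype.range_coe]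

theorem glue_injective : Function.Injective
    fun t : Σ s : Finset γ, MonotoneEquiv α s × MonotoneEquiv β {c // c ∉ s} =>
      glue t.1 t.2.1 t.2.2 := by
  rintro ⟨s, f, g⟩ ⟨s', f', g'⟩ h
  obtain rfl : s = s' := Finset.coe_injective <| by
    rw [← range_glue_inl s f g, ← range_glue_inl s' f' g']
    exact congrArg (fun e : MonotoneEquiv (α ⊕ β) γ => Set.range fun a => e.1 (.inl a)) h
  have apply_eq (x : α ⊕ β) : (glue s f g).1 x = (glue s f' g').1 x :=
    congrArg (fun e : MonotoneEquiv (α ⊕ β) γ => e.1 x) h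
  obtain rfl : f = f' := Subtype.ext <| Equiv.ext fun a => Subtype.ext <| apply_eq (.inl a)
  obtain rfl : g = g' := Subtype.ext <| Equiv.ext fun b => Subtype.ext <| apply_eq (.inr b)
  rfl

theorem glue_surjective [Finite α] : Function.Surjective
    fun t : Σ s : Finset γ, MonotoneEquiv α s × MonotoneEquiv β {c // c ∉ s} =>
      glue t.1 t.2.1 t.2.2 := by
  intro e
  let s : Finset γ := (Set.finite_range fun a => e.1 (.inl a)).toFinset
  have mem_s (x : α ⊕ β) : x.isLeft ↔ e.1 x ∈ s := by cases x <;> simp [s]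
  have notMem_s (x : α ⊕ β) : x.isRight ↔ e.1 x ∉ s := by rw [← mem_s, Sum.not_isLeft]
  let restrictLeft : α ≃ s := Equiv.sumIsLeft.symm.trans (e.1.subtypeEquiv mem_s)
  let restrictRight : β ≃ {c // c ∉ s} := Equiv.sumIsRight.symm.trans (e.1.subtypeEquiv notMem_s)
  refine ⟨⟨s, ⟨restrictLeft, fun a b hab => e.2 (Sum.inl_mono hab)⟩,
    ⟨restrictRight, fun a b hab => e.2 (Sum.inr_mono hab)⟩⟩, Subtype.ext <| Equiv.ext ?_⟩
  rintro (a | b) <;> rfl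

end Sum

end MonotoneEquiv

theorem numLinearExtensions_congr (e : α ≃o β) :
    numLinearExtensions α = numLinearExtensions β := by
  rw [numLinearExtensions, Nat.card_congr e.toEquiv]
  exact Nat.card_congr (MonotoneEquiv.congr e (OrderIso.refl _))

theorem numLinearExtensions_of_isEmpty [IsEmpty α] : numLinearExtensions α = 1 := by
  rw [← MonotoneEquiv.card_eq_numLinearExtensions (γ := Empty) (by simp),
    Nat.card_eq_one_iff_unique]
  exact ⟨inferInstance, ⟨Equiv.equivOfIsEmpty α Empty, Subsingleton.monotone _⟩⟩

theorem numLinearExtensions_withBot [Finite α] :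
    numLinearExtensions (WithBot α) = numLinearExtensions α := by
  rw [← MonotoneEquiv.card_eq_numLinearExtensions (γ := WithBot (Fin (Nat.card α)))]
  · exact (Nat.card_eq_of_bijective _ ⟨MonotoneEquiv.withBotCongr_injective,
      MonotoneEquiv.withBotCongr_surjective⟩).symm
  · simp [WithBot]

theorem numLinearExtensions_sum [Finite α] [Finite β] :
    numLinearExtensions (α ⊕ β) = (Nat.card α + Nat.card β).choose (Nat.card α) *
      (numLinearExtensions α * numLinearExtensions β) := by
  set γ := Fin (Nat.card (α ⊕ β))
  have card_γ : Nat.card γ = Nat.card α + Nat.card β := by simp [γ]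
  have card_compl (s : Finset γ) (hs : s.card = Nat.card α) :
      Nat.card {c // c ∉ s} = Nat.card β := by
    rw [Nat.card_eq_fintype_card] at card_γ ⊢
    rw [Fintype.card_subtype_compl, card_γ, Fintype.card_coe, hs, Nat.add_sub_cancel_left]
  calc numLinearExtensions (α ⊕ β)
      = ∑ s : Finset γ, Nat.card (MonotoneEquiv α s) * Nat.card (MonotoneEquiv β {c // c ∉ s}) := by
        rw [numLinearExtensions, ← Nat.card_eq_of_bijective _
          ⟨MonotoneEquiv.glue_injective, MonotoneEquiv.glue_surjective⟩, Nat.card_sigma]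
        simp only [Nat.card_prod, γ]
    _ = ∑ s ∈ Finset.univ.powersetCard (Nat.card α),
          Nat.card (MonotoneEquiv α s) * Nat.card (MonotoneEquiv β {c // c ∉ s}) := by
        refine (Finset.sum_subset (Finset.subset_univ _) fun s _ hs => ?_).symm
        rw [MonotoneEquiv.card_eq_zero, zero_mul]
        simpa using hs
    _ = ∑ _s ∈ (Finset.univ : Finset γ).powersetCard (Nat.card α),
          numLinearExtensions α * numLinearExtensions β := by
        refine Finset.sum_congr rfl fun s hs => ?_
        have hs := (Finset.mem_powersetCard.1 hs).2
        rw [MonotoneEquiv.card_eq_numLinearExtensions (by simpa using hs),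
          MonotoneEquiv.card_eq_numLinearExtensions (card_compl s hs)]
    _ = _ := by
        rw [Finset.sum_const, Finset.card_powersetCard, Finset.card_univ, smul_eq_mul,
          ← Nat.card_eq_fintype_card, card_γ]

end LinearExtensions

namespace BinTree

theorem nil_mem_positions_node (l r : BinTree) : [] ∈ (node l r).positions :=
  List.mem_cons_self

theorem cons_mem_positions_node {l r : BinTree} {b : Bool} {p : List Bool} :
    b :: p ∈ (node l r).positions ↔ p ∈ (bif b then r else l).positions := by
  cases b <;> simp [positions]

/-- The vertices of `T`, as a type of its own so that it can carry the ancestor order rather than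
the lexicographic order of `List Bool`. -/
def Vertex (T : BinTree) : Type := {p // p ∈ T.positions}

namespace Vertex

instance (T : BinTree) : PartialOrder T.Vertex where
  le v w := v.1 <+: w.1
  le_refl v := List.prefix_rfl
  le_trans _ _ _ := List.IsPrefix.trans
  le_antisymm _ _ h h' := Subtype.ext (h.eq_of_length_le h'.length_le)

theorem le_iff_prefix {T : BinTree} {v w : T.Vertex} : v ≤ w ↔ v.1 <+: w.1 := Iff.rfl

instance (T : BinTree) : Finite T.Vertex := List.finite_toSet T.positions

instance : IsEmpty (Vertex nil) := ⟨fun v => List.not_mem_nil v.2⟩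

variable {l r : BinTree}

/-- The vertices of `node l r`, assembled from its root `⊥` and the vertices of `l` and `r`. -/
def ofWithBotSum : WithBot (l.Vertex ⊕ r.Vertex) → (node l r).Vertex :=
  WithBot.recBotCoe ⟨[], nil_mem_positions_node l r⟩ <|
    Sum.elim (fun v => ⟨false :: v.1, cons_mem_positions_node.2 v.2⟩)
      fun v => ⟨true :: v.1, cons_mem_positions_node.2 v.2⟩

theorem ofWithBotSum_le_iff (v w : WithBot (l.Vertex ⊕ r.Vertex)) :
    ofWithBotSum v ≤ ofWithBotSum w ↔ v ≤ w := by
  induction v with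
  | bot => exact iff_of_true List.nil_prefix bot_le
  | coe v =>
    induction w with
    | bot =>
      refine iff_of_false (fun h => ?_) (WithBot.not_coe_le_bot v)
      cases v <;> exact List.cons_ne_nil _ _ (List.prefix_nil.1 h)
    | coe w =>
      cases v <;> cases w <;> exact List.cons_prefix_cons.trans (by simp [le_iff_prefix])

theorem ofWithBotSum_surjective : Function.Surjective (ofWithBotSum (l := l) (r := r)) := by
  rintro ⟨_ | ⟨b, p⟩, hp⟩
  · exact ⟨⊥, rfl⟩
  · rw [cons_mem_positions_node] at hp
    cases b with
    | false => exact ⟨(.inl ⟨p, hp⟩ : l.Vertex ⊕ r.Vertex), rfl⟩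
    | true => exact ⟨(.inr ⟨p, hp⟩ : l.Vertex ⊕ r.Vertex), rfl⟩

/-- The ancestor order of `node l r` is the disjoint union of those of `l` and `r` with a least
element added. -/
noncomputable def nodeOrderIso (l r : BinTree) :
    WithBot (l.Vertex ⊕ r.Vertex) ≃o (node l r).Vertex :=
  RelIso.ofSurjective (OrderEmbedding.ofMapLEIff ofWithBotSum ofWithBotSum_le_iff)
    ofWithBotSum_surjective

theorem card_eq_size (T : BinTree) : Nat.card T.Vertex = T.size := by
  induction T with
  | nil => exact Nat.card_of_isEmpty
  | node l r hl hr =>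
    rw [← Nat.card_congr (nodeOrderIso l r).toEquiv, size, ← hl, ← hr, ← Nat.card_sum]
    exact Finite.card_option

end Vertex

theorem mem_positions_of_prefix {T : BinTree} {p q : List Bool} (hq : q ∈ T.positions)
    (hpq : p <+: q) : p ∈ T.positions := by
  induction T generalizing p q with
  | nil => exact absurd hq List.not_mem_nil
  | node l r hl hr =>
    rcases p with _ | ⟨b, p⟩
    · exact nil_mem_positions_node l r
    · obtain ⟨t, rfl⟩ := hpq
      rw [List.cons_append, cons_mem_positions_node] at hq
      rw [cons_mem_positions_node]
      cases b with
      | false => exact hl hq (List.prefix_append p t)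
      | true => exact hr hq (List.prefix_append p t)

theorem monotone_iff_lt_of_child {T : BinTree} {β : Type*} [PartialOrder β] (f : T.Vertex ≃ β) :
    Monotone f ↔ ∀ v w : T.Vertex, (∃ b, w.1 = v.1 ++ [b]) → f v < f w := by
  constructor
  · rintro hf v w ⟨b, hw⟩
    have hvw : v < w := lt_of_le_of_ne ⟨[b], hw.symm⟩ fun h => by simp [h] at hw
    exact hf.strictMono_of_injective f.injective hvw
  · rintro hf v ⟨_, hw⟩ ⟨t, rfl⟩
    induction t using List.reverseRecOn with
    | nil => exact (congrArg f (Subtype.ext (List.append_nil v.1).symm)).le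
    | append_singleton t b ih =>
      have ht : v.1 ++ t ∈ T.positions :=
        mem_positions_of_prefix hw ⟨[b], List.append_assoc ..⟩
      exact (ih ht).trans (hf ⟨_, ht⟩ ⟨_, hw⟩ ⟨b, (List.append_assoc ..).symm⟩).le

theorem incLabelings_eq_numLinearExtensions (T : BinTree) :
    T.incLabelings = numLinearExtensions T.Vertex := by
  rw [← MonotoneEquiv.card_eq_numLinearExtensions (γ := Fin T.size)
    (by rw [Vertex.card_eq_size, Nat.card_fin])]
  exact Nat.card_congr <| (Equiv.subtypeSubtypeEquivSubtypeInter _ _).symm.trans <|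
    Equiv.bijectiveEquiv.subtypeEquiv fun ℓ =>
      (monotone_iff_lt_of_child (Equiv.ofBijective _ ℓ.2)).symm

theorem incLabelings_nil : nil.incLabelings = 1 := by
  rw [incLabelings_eq_numLinearExtensions, numLinearExtensions_of_isEmpty]

theorem incLabelings_node (l r : BinTree) : (node l r).incLabelings =
    (l.size + r.size).choose l.size * (l.incLabelings * r.incLabelings) := by
  simp only [incLabelings_eq_numLinearExtensions, ← Vertex.card_eq_size,
    ← numLinearExtensions_congr (Vertex.nodeOrderIso l r), numLinearExtensions_withBot,
    numLinearExtensions_sum]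

theorem hookProd_pos {f : ℕ → ℝ} (hf : ∀ n, 0 < n → 0 < f n) (T : BinTree) :
    0 < T.hookProd f := by
  induction T with
  | nil => exact one_pos
  | node l r hl hr => exact mul_pos (mul_pos (hf _ (Nat.succ_pos _)) hl) hr

theorem incLabelings_mul_hookProd (T : BinTree) :
    T.incLabelings * T.hookProd Nat.cast = T.size.factorial := by
  induction T with
  | nil => simp [incLabelings_nil, hookProd, size]
  | node l r hl hr =>
    have choose_mul : ((l.size + r.size).choose l.size * l.size.factorial * r.size.factorial : ℝ) =
        (l.size + r.size).factorial := by
      rw [Nat.choose_symm_add]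
      exact_mod_cast Nat.add_choose_mul_factorial_mul_factorial l.size r.size
    rw [incLabelings_node, size, hookProd, Nat.factorial_succ]
    push_cast
    rw [← choose_mul, ← hl, ← hr]
    ring

theorem incLabelings_eq_factorial_div_hookProd (T : BinTree) :
    (T.incLabelings : ℝ) = T.size.factorial / T.hookProd Nat.cast := by
  rw [eq_div_iff (hookProd_pos (fun n hn => Nat.cast_pos.2 hn) T).ne', incLabelings_mul_hookProd]

theorem size_completion (T : BinTree) : T.completion.size = 2 * T.size + 1 := by
  induction T with
  | nil => rfl
  | node l r hl hr => simp only [completion, size, hl, hr]; ring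

theorem hookProd_completion (f : ℕ → ℝ) (T : BinTree) : T.completion.hookProd f =
    f 1 ^ (T.size + 1) * T.hookProd fun h => f (2 * h + 1) := by
  induction T with
  | nil => simp [completion, hookProd, size]
  | node l r hl hr =>
    have hook_root : 2 * l.size + 1 + (2 * r.size + 1) + 1 = 2 * (l.size + r.size + 1) + 1 := by
      ring
    simp only [completion, hookProd, hl, hr, size_completion, size, hook_root]
    ring

end BinTree

/-- For a binary tree `T` with `n` vertices, the number of increasing
labelings of its completion `T̂` is `f^{T̂} = (2n+1)! / ∏_{v ∈ T} (2h_v+1)`,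
the hook lengths `h_v` being computed in `T`. -/
theorem completion_hook_length_formula (T : BinTree) :
    (T.completion.incLabelings : ℝ) =
      (Nat.factorial (2 * T.size + 1) : ℝ) / T.hookProd (fun h => (2 * h + 1 : ℝ)) := by
  rw [BinTree.incLabelings_eq_factorial_div_hookProd, BinTree.size_completion,
    BinTree.hookProd_completion]
  simp
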